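/- arXiv:2005.08898 — 2 statements merged into one kernel-verified Lean document; each statement's English description precedes it below -/
import Mathlib

section
/- Let X_star = U_star·Σ_star·V_star^T be the compact SVD of a rank-r matrix X_star ∈ R^{n₁×n₂}, set L_star = U_star·Σ_star^{1/2}, R_star = V_star·Σ_star^{1/2}, and F_star = [L_star; R_star]. For any L ∈ R^{n₁×r}, R ∈ R^{n₂×r} with F = [L; R], define dist(F, F_star) := inf over invertible Q ∈ GL(r) of sqrt(‖(LQ − L_star)Σ_star^{1/2}‖_F² + ‖(RQ^{-T} − R_star)Σ_star^{1/2}‖_F²). Then dist(F, F_star) ≤ sqrt(√2 + 1)·‖L·R^T − X_star‖_F. -/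
open Matrix

/-- Frobenius norm of a real matrix. -/
noncomputable def frob {n₁ n₂ : ℕ} (A : Matrix (Fin n₁) (Fin n₂) ℝ) : ℝ :=
  Real.sqrt (∑ i, ∑ j, (A i j) ^ 2)

/-- The scaled distance `dist(F, F_star)`: the infimum over invertible `Q` of
`sqrt(‖(LQ − L_star)Σ_star^{1/2}‖_F² + ‖(RQ^{-T} − R_star)Σ_star^{1/2}‖_F²)`,
where `Σ_star = diagonal σ`. -/
noncomputable def distF {n₁ n₂ r : ℕ}
    (L : Matrix (Fin n₁) (Fin r) ℝ) (R : Matrix (Fin n₂) (Fin r) ℝ)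
    (Lstar : Matrix (Fin n₁) (Fin r) ℝ) (Rstar : Matrix (Fin n₂) (Fin r) ℝ)
    (σ : Fin r → ℝ) : ℝ :=
  sInf {c : ℝ | ∃ Q : Matrix (Fin r) (Fin r) ℝ, IsUnit Q ∧
    c = Real.sqrt
      ((frob ((L * Q - Lstar) * Matrix.diagonal (fun i => Real.sqrt (σ i)))) ^ 2 +
       (frob ((R * (Q⁻¹)ᵀ - Rstar) * Matrix.diagonal (fun i => Real.sqrt (σ i)))) ^ 2)}


section aux
open scoped MatrixOrder

/-- Square roots of positive semidefinite matrices. -/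
theorem aux_sqrt {r : ℕ} (A : Matrix (Fin r) (Fin r) ℝ) (hA : A.PosSemidef) :
    ∃ B : Matrix (Fin r) (Fin r) ℝ, B.PosSemidef ∧ Bᵀ = B ∧ B * B = A := by
  refine ⟨CFC.sqrt A, ?_, ?_, ?_⟩
  · exact Matrix.nonneg_iff_posSemidef.1 (CFC.sqrt_nonneg A)
  · have := (Matrix.nonneg_iff_posSemidef.1 (CFC.sqrt_nonneg A)).isHermitian
    simpa [Matrix.IsHermitian] using this
  · exact CFC.sqrt_mul_sqrt_self A (Matrix.nonneg_iff_posSemidef.2 hA)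

end aux

theorem aux_tr {m n : Type*} [Fintype m] [Fintype n] (A : Matrix m n ℝ) :
    (Aᵀ * A).trace = ∑ i, ∑ j, A i j ^ 2 := by
  rw [Finset.sum_comm]
  simp [Matrix.trace, Matrix.mul_apply, sq]

theorem aux_tr_nonneg {m n : Type*} [Fintype m] [Fintype n] (A : Matrix m n ℝ) :
    0 ≤ (Aᵀ * A).trace := by
  rw [aux_tr]; positivity

theorem aux_psd {m : Type*} [Fintype m] {r : ℕ} (D : Matrix m (Fin r) ℝ)
    (P : Matrix (Fin r) (Fin r) ℝ) (hP : P.PosSemidef) : 0 ≤ ((Dᵀ * D) * P).trace := by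
  obtain ⟨B, -, hB, rfl⟩ := aux_sqrt P hP
  have := aux_tr_nonneg (D * B)
  rw [Matrix.transpose_mul, hB] at this
  convert this using 1
  rw [← Matrix.mul_assoc (Dᵀ * D), Matrix.trace_mul_comm]
  simp only [Matrix.mul_assoc]

theorem aux_core {r : ℕ} (M P S A : Matrix (Fin r) (Fin r) ℝ)
    (hM : Mᵀ = M) (hP : Pᵀ = P) (hS : Sᵀ = S) (hA : A = (2:ℝ) • M - (2:ℝ) • P + (2:ℝ) • S)
    (hAP : 0 ≤ (A * P).trace) :
    4 * (Real.sqrt 2 - 1) * (A * S).trace ≤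
      4 * (M * M).trace + 4 * (S * S).trace - 2 * (P * P).trace := by
  have h2 : Real.sqrt 2 * Real.sqrt 2 = 2 := Real.mul_self_sqrt (by norm_num)
  have h2' : Real.sqrt 2 ≤ 2 := by nlinarith [Real.sqrt_nonneg 2]
  set s := Real.sqrt 2 with hs
  have h1 := aux_tr_nonneg (A + s • (P - (2:ℝ) • S))
  have hAt : Aᵀ = A := by rw [hA]; simp [hM, hP, hS]
  have h3 : 0 ≤ (4 - 2 * s) * (A * P).trace := mul_nonneg (by linarith) hAP
  have e1 := Matrix.trace_mul_comm P M
  have e2 := Matrix.trace_mul_comm S M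
  have e3 := Matrix.trace_mul_comm S P
  simp only [Matrix.transpose_add, Matrix.transpose_smul, Matrix.transpose_sub, hAt, hP, hS] at h1
  rw [hA] at h1 h3 ⊢
  simp only [Matrix.mul_add, Matrix.add_mul, Matrix.mul_sub, Matrix.sub_mul, Matrix.smul_mul,
    Matrix.mul_smul, Matrix.trace_add, Matrix.trace_sub, Matrix.trace_smul, smul_eq_mul,
    e1, e2, e3, smul_sub, smul_add] at h1 h3 ⊢
  have k : ∀ x : ℝ, s * s * x = 2 * x := fun x => by rw [h2]
  linarith [k (P * P).trace, k (P * S).trace, k (S * S).trace]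

/-- Polar decomposition, invertible case. -/
theorem aux_polar_unit {r : ℕ} (N : Matrix (Fin r) (Fin r) ℝ) (hN : IsUnit N) :
    ∃ O : Matrix (Fin r) (Fin r) ℝ, Oᵀ * O = 1 ∧ (N * O).PosSemidef := by
  have hNN : (N * Nᵀ).PosSemidef := by
    simpa using Matrix.posSemidef_self_mul_conjTranspose N
  obtain ⟨B, hBp, hBt, hBB⟩ := aux_sqrt _ hNN
  have hd := (Matrix.isUnit_iff_isUnit_det _).1 hN
  have hdt : IsUnit (Nᵀ).det := by rwa [Matrix.det_transpose]
  refine ⟨N⁻¹ * B, ?_, ?_⟩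
  · have hO : (N⁻¹ * B) * (N⁻¹ * B)ᵀ = 1 := by
      rw [Matrix.transpose_mul, hBt, Matrix.mul_assoc, ← Matrix.mul_assoc B, hBB,
        Matrix.transpose_nonsing_inv, Matrix.mul_assoc N, Matrix.mul_nonsing_inv _ hdt,
        Matrix.mul_one, Matrix.nonsing_inv_mul _ hd]
    exact mul_eq_one_comm.1 hO
  · rwa [← Matrix.mul_assoc, Matrix.mul_nonsing_inv _ hd, Matrix.one_mul]

theorem aux_orth_compact (r : ℕ) :
    IsCompact {O : Matrix (Fin r) (Fin r) ℝ | Oᵀ * O = 1} := by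
  have hK : IsCompact (Set.pi Set.univ fun _ : Fin r => Set.pi Set.univ fun _ : Fin r =>
      Set.Icc (-1 : ℝ) 1) :=
    isCompact_univ_pi fun _ => isCompact_univ_pi fun _ => isCompact_Icc
  refine IsCompact.of_isClosed_subset hK ?_ ?_
  · exact isClosed_eq (by fun_prop) continuous_const
  · intro O hO i _ j _
    have h1 : (Oᵀ * O) j j = 1 := by rw [hO]; simp
    rw [Matrix.mul_apply] at h1
    have h2 : O i j * O i j ≤ 1 := by
      rw [← h1]
      exact Finset.single_le_sum (f := fun k => Oᵀ j k * O k j)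
        (fun k _ => mul_self_nonneg (O k j)) (Finset.mem_univ i)
    exact abs_le.1 (abs_le_one_iff_mul_self_le_one.2 h2)

theorem aux_psd_closed (r : ℕ) : IsClosed {A : Matrix (Fin r) (Fin r) ℝ | A.PosSemidef} := by
  simp only [Matrix.posSemidef_iff_dotProduct_mulVec, Matrix.IsHermitian, Set.ofPred_and,
    Set.ofPred_forall]
  refine IsClosed.inter (isClosed_eq (by fun_prop) continuous_id) (isClosed_iInter fun x => ?_)
  exact isClosed_le continuous_const (by fun_prop)

theorem aux_polar {r : ℕ} (N : Matrix (Fin r) (Fin r) ℝ) :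
    ∃ O : Matrix (Fin r) (Fin r) ℝ, Oᵀ * O = 1 ∧ (N * O).PosSemidef := by
  have hfin : (spectrum ℝ (-N)).Finite := Matrix.finite_real_spectrum
  have hclosed : IsClosed (Prod.snd '' {p : {O : Matrix (Fin r) (Fin r) ℝ | Oᵀ * O = 1} ×
      Matrix (Fin r) (Fin r) ℝ | (p.2 * p.1.1).PosSemidef}) := by
    have := isCompact_iff_compactSpace.1 (aux_orth_compact r)
    refine isClosedMap_snd_of_compactSpace _ ?_
    exact (aux_psd_closed r).preimage
      (f := fun p : {O : Matrix (Fin r) (Fin r) ℝ | Oᵀ * O = 1} ×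
        Matrix (Fin r) (Fin r) ℝ => p.2 * p.1.1) (by fun_prop)
  have hev : ∀ᶠ t : ℝ in nhdsWithin 0 {0}ᶜ, t ∉ spectrum ℝ (-N) := by
    have h := (hfin.subset (Set.sdiff_subset (t := {(0:ℝ)}))).isClosed.isOpen_compl.mem_nhds
      (x := (0:ℝ)) (by simp)
    filter_upwards [mem_nhdsWithin_of_mem_nhds h, self_mem_nhdsWithin] with t ht ht0 hts
    exact ht ⟨hts, ht0⟩
  have hlim : Filter.Tendsto (fun t : ℝ => algebraMap ℝ (Matrix (Fin r) (Fin r) ℝ) t + N)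
      (nhdsWithin 0 {0}ᶜ) (nhds N) := by
    have : Continuous (fun t : ℝ => t • (1 : Matrix (Fin r) (Fin r) ℝ) + N) := by fun_prop
    have h := this.tendsto 0
    simp only [zero_smul, zero_add] at h
    simp only [Algebra.algebraMap_eq_smul_one]
    exact h.mono_left nhdsWithin_le_nhds
  have hmem := hclosed.mem_of_tendsto hlim (by
    filter_upwards [hev] with t ht
    rw [spectrum.notMem_iff, sub_neg_eq_add] at ht
    obtain ⟨O, h1, h2⟩ := aux_polar_unit _ ht
    exact ⟨(⟨O, h1⟩, _), h2, rfl⟩)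
  obtain ⟨⟨⟨O, h1⟩, N'⟩, h2, rfl⟩ := hmem
  exact ⟨O, h1, h2⟩

/-- Balancing two positive definite matrices. -/
theorem aux_balance {r : ℕ} (S T : Matrix (Fin r) (Fin r) ℝ) (hS : S.PosDef) (hT : T.PosDef) :
    ∃ Q : Matrix (Fin r) (Fin r) ℝ, IsUnit Q ∧ Qᵀ * S * Q = Q⁻¹ * T * (Q⁻¹)ᵀ := by
  obtain ⟨B, hB, hBt, hBB⟩ := aux_sqrt S hS.posSemidef
  have hBu : IsUnit B.det := by
    have := (Matrix.isUnit_iff_isUnit_det _).1 hS.isUnit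
    rw [← hBB, Matrix.det_mul] at this
    exact isUnit_of_mul_isUnit_left this
  have hTp : (B * T * B).PosSemidef := by
    have := hT.posSemidef.mul_mul_conjTranspose_same B
    simpa [hBt] using this
  obtain ⟨C, hC, hCt, hCC⟩ := aux_sqrt _ hTp
  have hCu : IsUnit C.det := by
    have h1 := (Matrix.isUnit_iff_isUnit_det _).1 hT.isUnit
    have : IsUnit (C * C).det := by
      rw [hCC, Matrix.det_mul, Matrix.det_mul]; exact (hBu.mul h1).mul hBu
    rw [Matrix.det_mul] at this
    exact isUnit_of_mul_isUnit_left this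
  have hBit : (B⁻¹)ᵀ = B⁻¹ := by rw [Matrix.transpose_nonsing_inv, hBt]
  have hWp : (B⁻¹ * C * B⁻¹).PosSemidef := by
    have := hC.mul_mul_conjTranspose_same B⁻¹
    rwa [Matrix.conjTranspose_eq_transpose_of_trivial, hBit] at this
  obtain ⟨Q, hQ, hQt, hQQ⟩ := aux_sqrt _ hWp
  have hQu : IsUnit Q.det := by
    have : IsUnit (Q * Q).det := by
      rw [hQQ, Matrix.det_mul, Matrix.det_mul]
      have := Matrix.isUnit_nonsing_inv_det _ hBu
      exact (this.mul hCu).mul this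
    rw [Matrix.det_mul] at this
    exact isUnit_of_mul_isUnit_left this
  have key : (Q * Q) * S * (Q * Q) = T := by
    rw [hQQ, ← hBB]
    calc B⁻¹ * C * B⁻¹ * (B * B) * (B⁻¹ * C * B⁻¹)
        = B⁻¹ * C * (B⁻¹ * B) * (B * B⁻¹) * C * B⁻¹ := by simp only [Matrix.mul_assoc]
      _ = B⁻¹ * (C * C) * B⁻¹ := by
        rw [Matrix.nonsing_inv_mul _ hBu, Matrix.mul_nonsing_inv _ hBu]
        simp only [Matrix.mul_assoc, Matrix.one_mul]
      _ = (B⁻¹ * B) * T * (B * B⁻¹) := by rw [hCC]; simp only [Matrix.mul_assoc]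
      _ = T := by
        rw [Matrix.nonsing_inv_mul _ hBu, Matrix.mul_nonsing_inv _ hBu]; simp
  refine ⟨Q, (Matrix.isUnit_iff_isUnit_det _).2 hQu, ?_⟩
  rw [Matrix.transpose_nonsing_inv, hQt, ← key]
  calc Q * S * Q = (1 * Q) * S * (Q * 1) := by simp
    _ = (Q⁻¹ * Q * Q) * S * (Q * (Q * Q⁻¹)) := by
      rw [Matrix.nonsing_inv_mul _ hQu, Matrix.mul_nonsing_inv _ hQu]
    _ = _ := by simp only [Matrix.mul_assoc]

/-- Aligned case. -/
theorem aux_aligned {m n : Type*} [Fintype m] [Fintype n] {r : ℕ}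
    (L Ls : Matrix m (Fin r) ℝ) (R Rs : Matrix n (Fin r) ℝ) (S : Matrix (Fin r) (Fin r) ℝ)
    (hLs : Lsᵀ * Ls = S) (hRs : Rsᵀ * Rs = S) (hbal : Lᵀ * L = Rᵀ * R)
    (hP : (Lsᵀ * L + Rsᵀ * R).PosSemidef) :
    (((L - Ls)ᵀ * (L - Ls)) * S).trace + (((R - Rs)ᵀ * (R - Rs)) * S).trace ≤
      (Real.sqrt 2 + 1) * ((L * Rᵀ - Ls * Rsᵀ)ᵀ * (L * Rᵀ - Ls * Rsᵀ)).trace := by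
  have h2 : Real.sqrt 2 * Real.sqrt 2 = 2 := Real.mul_self_sqrt (by norm_num)
  have hs1 : 0 ≤ Real.sqrt 2 := Real.sqrt_nonneg 2
  obtain ⟨M, hM⟩ : ∃ M, M = Lᵀ * L := ⟨_, rfl⟩
  obtain ⟨a, ha⟩ : ∃ a, a = Lsᵀ * L := ⟨_, rfl⟩
  obtain ⟨b, hb⟩ : ∃ b, b = Rsᵀ * R := ⟨_, rfl⟩
  have hat : Lᵀ * Ls = aᵀ := by rw [ha]; simp
  have hbt : Rᵀ * Rs = bᵀ := by rw [hb]; simp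
  have hMR : Rᵀ * R = M := by rw [hM, hbal]
  have hMt : Mᵀ = M := by rw [hM]; simp
  have hSt : Sᵀ = S := by rw [← hLs]; simp
  rw [← ha, ← hb] at hP
  have hPt : (a + b)ᵀ = a + b := by simpa [Matrix.IsHermitian] using hP.isHermitian
  have hDL : (L - Ls)ᵀ * (L - Ls) = M - aᵀ - a + S := by
    simp only [Matrix.transpose_sub, Matrix.sub_mul, Matrix.mul_sub, ← hM, ← ha, hat, hLs]
    abel
  have hDR : (R - Rs)ᵀ * (R - Rs) = M - bᵀ - b + S := by
    simp only [Matrix.transpose_sub, Matrix.sub_mul, Matrix.mul_sub, hMR, ← hb, hbt, hRs]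
    abel
  have hA : (L - Ls)ᵀ * (L - Ls) + (R - Rs)ᵀ * (R - Rs) =
      (2:ℝ) • M - (2:ℝ) • (a + b) + (2:ℝ) • S := by
    have : (2:ℝ) • (a + b) = (a + b)ᵀ + (a + b) := by rw [hPt, two_smul]
    rw [this, hDL, hDR, two_smul, two_smul, Matrix.transpose_add]
    abel
  have hAP : 0 ≤ (((L - Ls)ᵀ * (L - Ls) + (R - Rs)ᵀ * (R - Rs)) * (a + b)).trace := by
    rw [Matrix.add_mul, Matrix.trace_add]
    exact add_nonneg (aux_psd _ _ hP) (aux_psd _ _ hP)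
  have core := aux_core M (a + b) S _ hMt hPt hSt hA hAP
  rw [Matrix.add_mul, Matrix.trace_add] at core
  have hE : ((L * Rᵀ - Ls * Rsᵀ)ᵀ * (L * Rᵀ - Ls * Rsᵀ)).trace =
      (M * M).trace + (S * S).trace - 2 * (aᵀ * b).trace := by
    have t1 : (R * (Lᵀ * (L * Rᵀ))).trace = (M * M).trace := by
      rw [Matrix.trace_mul_comm, ← Matrix.mul_assoc Lᵀ, ← hM, Matrix.mul_assoc, hMR]
    have t2 : (Rs * (Lsᵀ * (Ls * Rsᵀ))).trace = (S * S).trace := by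
      rw [Matrix.trace_mul_comm, ← Matrix.mul_assoc Lsᵀ, hLs, Matrix.mul_assoc, hRs]
    have t3 : (R * (Lᵀ * (Ls * Rsᵀ))).trace = (aᵀ * b).trace := by
      rw [Matrix.trace_mul_comm, ← Matrix.mul_assoc Lᵀ, hat, Matrix.mul_assoc, ← hb]
    have t4 : (Rs * (Lsᵀ * (L * Rᵀ))).trace = (aᵀ * b).trace := by
      rw [Matrix.trace_mul_comm, ← Matrix.mul_assoc Lsᵀ, ← ha, Matrix.mul_assoc, hbt,
        ← Matrix.trace_transpose, Matrix.transpose_mul, Matrix.transpose_transpose,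
        Matrix.trace_mul_comm]
    simp only [Matrix.transpose_sub, Matrix.transpose_mul, Matrix.transpose_transpose,
      Matrix.sub_mul, Matrix.mul_sub, Matrix.trace_sub, Matrix.mul_assoc, t1, t2, t3, t4]
    ring
  have hab : 4 * (aᵀ * b).trace ≤ ((a + b) * (a + b)).trace := by
    have h := aux_tr_nonneg (a - b)
    have e : (bᵀ * a).trace = (aᵀ * b).trace := by
      rw [← Matrix.trace_transpose, Matrix.transpose_mul, Matrix.transpose_transpose]
    have e2 : ((a + b) * (a + b)).trace = ((a + b)ᵀ * (a + b)).trace := by rw [hPt]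
    rw [e2]
    simp only [Matrix.transpose_sub, Matrix.transpose_add, Matrix.sub_mul, Matrix.mul_sub,
      Matrix.add_mul, Matrix.mul_add, Matrix.trace_sub, Matrix.trace_add, e] at h ⊢
    linarith
  rw [hE]
  have h5 : (Real.sqrt 2 - 1) * ((((L - Ls)ᵀ * (L - Ls)) * S).trace +
      (((R - Rs)ᵀ * (R - Rs)) * S).trace) ≤
      (M * M).trace + (S * S).trace - 2 * (aᵀ * b).trace := by linarith
  have h6 := mul_le_mul_of_nonneg_left h5 (by linarith : 0 ≤ Real.sqrt 2 + 1)
  refine le_trans (le_of_eq ?_) h6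
  rw [← mul_assoc]
  have : (Real.sqrt 2 + 1) * (Real.sqrt 2 - 1) = 1 := by linarith
  rw [this, one_mul]

/-- Full column rank case. -/
theorem aux_full {m n : Type*} [Fintype m] [Fintype n] {r : ℕ}
    (L Ls : Matrix m (Fin r) ℝ) (R Rs : Matrix n (Fin r) ℝ) (S : Matrix (Fin r) (Fin r) ℝ)
    (hLs : Lsᵀ * Ls = S) (hRs : Rsᵀ * Rs = S)
    (hL : (Lᵀ * L).PosDef) (hR : (Rᵀ * R).PosDef) :
    ∃ Q : Matrix (Fin r) (Fin r) ℝ, IsUnit Q ∧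
    (((L * Q - Ls)ᵀ * (L * Q - Ls)) * S).trace +
      (((R * (Q⁻¹)ᵀ - Rs)ᵀ * (R * (Q⁻¹)ᵀ - Rs)) * S).trace ≤
      (Real.sqrt 2 + 1) * ((L * Rᵀ - Ls * Rsᵀ)ᵀ * (L * Rᵀ - Ls * Rsᵀ)).trace := by
  obtain ⟨Q, hQ, hbal⟩ := aux_balance _ _ hL hR
  obtain ⟨O, hO, hP⟩ := aux_polar (Lsᵀ * (L * Q) + Rsᵀ * (R * (Q⁻¹)ᵀ))
  have hO' : O * Oᵀ = 1 := mul_eq_one_comm.1 hO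
  have hOu : IsUnit O := IsUnit.of_mul_eq_one _ hO'
  have hOi : O⁻¹ = Oᵀ := Matrix.inv_eq_left_inv hO
  have hQd := (Matrix.isUnit_iff_isUnit_det _).1 hQ
  have hinv : ((Q * O)⁻¹)ᵀ = (Q⁻¹)ᵀ * O := by
    rw [Matrix.mul_inv_rev, hOi, Matrix.transpose_mul, Matrix.transpose_transpose]
  refine ⟨Q * O, hQ.mul hOu, ?_⟩
  have hprod : (L * (Q * O)) * (R * ((Q * O)⁻¹)ᵀ)ᵀ = L * Rᵀ := by
    rw [hinv]
    simp only [Matrix.transpose_mul, Matrix.transpose_transpose]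
    calc L * (Q * O) * (Oᵀ * Q⁻¹ * Rᵀ) = L * Q * (O * Oᵀ) * Q⁻¹ * Rᵀ := by
          simp only [Matrix.mul_assoc]
      _ = L * (Q * Q⁻¹) * Rᵀ := by rw [hO']; simp only [Matrix.mul_assoc, Matrix.one_mul]
      _ = L * Rᵀ := by rw [Matrix.mul_nonsing_inv _ hQd, Matrix.mul_one]
  rw [← hprod]
  refine aux_aligned _ _ _ _ S hLs hRs ?_ ?_
  · rw [hinv]
    have := congrArg (fun Z => Oᵀ * Z * O) hbal
    simpa only [Matrix.transpose_mul, Matrix.transpose_transpose, Matrix.mul_assoc] using this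
  · rw [hinv]
    simpa only [Matrix.add_mul, Matrix.mul_assoc] using hP

theorem aux_frob_sq {a b : ℕ} (A : Matrix (Fin a) (Fin b) ℝ) : frob A ^ 2 = (Aᵀ * A).trace := by
  rw [aux_tr, frob, Real.sq_sqrt (by positivity)]

theorem aux_weight {m : Type*} [Fintype m] {r : ℕ} (D : Matrix m (Fin r) ℝ) (σ : Fin r → ℝ)
    (hσ : ∀ i, 0 < σ i) :
    ((D * Matrix.diagonal (fun i => Real.sqrt (σ i)))ᵀ *
      (D * Matrix.diagonal (fun i => Real.sqrt (σ i)))).trace =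
      ((Dᵀ * D) * Matrix.diagonal σ).trace := by
  have h : Matrix.diagonal (fun i => Real.sqrt (σ i)) * Matrix.diagonal (fun i => Real.sqrt (σ i))
      = Matrix.diagonal σ := by
    rw [Matrix.diagonal_mul_diagonal]
    congr 1; ext i; exact Real.mul_self_sqrt (hσ i).le
  rw [← h, Matrix.transpose_mul, Matrix.diagonal_transpose, Matrix.mul_assoc,
    Matrix.trace_mul_comm]
  simp only [Matrix.mul_assoc]

theorem aux_reg_posDef {m : Type*} [Fintype m] {r : ℕ} (L : Matrix m (Fin r) ℝ) (t : ℝ)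
    (ht : 0 < t) :
    ((Matrix.fromRows L (t • (1 : Matrix (Fin r) (Fin r) ℝ)))ᵀ *
      (Matrix.fromRows L (t • (1 : Matrix (Fin r) (Fin r) ℝ)))).PosDef := by
  rw [Matrix.transpose_fromRows, Matrix.fromCols_mul_fromRows]
  have h1 : (Lᵀ * L).PosSemidef := by simpa using Matrix.posSemidef_conjTranspose_mul_self L
  refine Matrix.PosDef.posSemidef_add h1 ?_
  have : (t • (1 : Matrix (Fin r) (Fin r) ℝ))ᵀ * (t • (1 : Matrix (Fin r) (Fin r) ℝ)) =
      (t * t) • (1 : Matrix (Fin r) (Fin r) ℝ) := by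
    simp [smul_smul]
  rw [this]
  exact Matrix.PosDef.one.smul (by positivity)

theorem aux_reg_tr {m n : Type*} [Fintype m] [Fintype n] {r : ℕ}
    (L Ls : Matrix m (Fin r) ℝ) (R Rs : Matrix n (Fin r) ℝ) (t : ℝ) :
    (((Matrix.fromRows L (t • (1 : Matrix (Fin r) (Fin r) ℝ))) *
      (Matrix.fromRows R (t • (1 : Matrix (Fin r) (Fin r) ℝ)))ᵀ -
      (Matrix.fromRows Ls (0 : Matrix (Fin r) (Fin r) ℝ)) *
      (Matrix.fromRows Rs (0 : Matrix (Fin r) (Fin r) ℝ))ᵀ)ᵀ *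
     ((Matrix.fromRows L (t • (1 : Matrix (Fin r) (Fin r) ℝ))) *
      (Matrix.fromRows R (t • (1 : Matrix (Fin r) (Fin r) ℝ)))ᵀ -
      (Matrix.fromRows Ls (0 : Matrix (Fin r) (Fin r) ℝ)) *
      (Matrix.fromRows Rs (0 : Matrix (Fin r) (Fin r) ℝ))ᵀ)).trace =
    ((L * Rᵀ - Ls * Rsᵀ)ᵀ * (L * Rᵀ - Ls * Rsᵀ)).trace +
      t ^ 2 * ((∑ i, ∑ j, L i j ^ 2) + ∑ i, ∑ j, R i j ^ 2) + t ^ 4 * r := by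
  rw [Matrix.transpose_fromRows, Matrix.transpose_fromRows, Matrix.fromRows_mul_fromCols,
    Matrix.fromRows_mul_fromCols]
  have e : Matrix.fromBlocks (L * Rᵀ) (L * (t • (1 : Matrix (Fin r) (Fin r) ℝ))ᵀ)
        ((t • (1 : Matrix (Fin r) (Fin r) ℝ)) * Rᵀ)
        ((t • (1 : Matrix (Fin r) (Fin r) ℝ)) * (t • (1 : Matrix (Fin r) (Fin r) ℝ))ᵀ) -
      Matrix.fromBlocks (Ls * Rsᵀ) (Ls * (0 : Matrix (Fin r) (Fin r) ℝ)ᵀ)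
        ((0 : Matrix (Fin r) (Fin r) ℝ) * Rsᵀ)
        ((0 : Matrix (Fin r) (Fin r) ℝ) * (0 : Matrix (Fin r) (Fin r) ℝ)ᵀ) =
      Matrix.fromBlocks (L * Rᵀ - Ls * Rsᵀ) (t • L) (t • Rᵀ)
        ((t * t) • (1 : Matrix (Fin r) (Fin r) ℝ)) := by
    rw [sub_eq_add_neg, Matrix.fromBlocks_neg, Matrix.fromBlocks_add]
    simp [smul_smul, sub_eq_add_neg]
  have e4 : ∑ i : Fin r, ∑ j : Fin r, (((t * t) • (1 : Matrix (Fin r) (Fin r) ℝ)) i j) ^ 2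
      = t ^ 4 * r := by
    simp [Matrix.one_apply, ite_pow]
    ring
  have e3 : ∑ i : Fin r, ∑ j : n, ((t • Rᵀ) i j) ^ 2 = t ^ 2 * ∑ i, ∑ j, R i j ^ 2 := by
    rw [Finset.sum_comm]
    simp [mul_pow, Finset.mul_sum]
  have e2 : ∑ i : m, ∑ j : Fin r, ((t • L) i j) ^ 2 = t ^ 2 * ∑ i, ∑ j, L i j ^ 2 := by
    simp [mul_pow, Finset.mul_sum]
  rw [e, aux_tr, aux_tr]
  simp only [Fintype.sum_sum_type, Matrix.fromBlocks_apply₁₁, Matrix.fromBlocks_apply₁₂,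
    Matrix.fromBlocks_apply₂₁, Matrix.fromBlocks_apply₂₂, Finset.sum_add_distrib, e2, e3, e4]
  ring

theorem aux_reg_ge {m : Type*} [Fintype m] {r : ℕ} (L Ls : Matrix m (Fin r) ℝ)
    (W Q S : Matrix (Fin r) (Fin r) ℝ) (hS : S.PosSemidef) :
    (((L * Q - Ls)ᵀ * (L * Q - Ls)) * S).trace ≤
    (((Matrix.fromRows L W * Q - Matrix.fromRows Ls (0 : Matrix (Fin r) (Fin r) ℝ))ᵀ *
      (Matrix.fromRows L W * Q - Matrix.fromRows Ls (0 : Matrix (Fin r) (Fin r) ℝ))) * S).trace := by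
  have e : Matrix.fromRows L W * Q - Matrix.fromRows Ls (0 : Matrix (Fin r) (Fin r) ℝ) =
      Matrix.fromRows (L * Q - Ls) (W * Q) := by
    rw [Matrix.fromRows_mul]
    ext (i | i) j <;> simp
  rw [e, Matrix.transpose_fromRows, Matrix.fromCols_mul_fromRows, Matrix.add_mul, Matrix.trace_add]
  linarith [aux_psd (W * Q) S hS]

/-- `dist(F, F_star) ≤ sqrt(√2 + 1) ‖L Rᵀ − X_star‖_F`. -/
theorem distF_le_frob {n₁ n₂ r : ℕ}
    (Xstar : Matrix (Fin n₁) (Fin n₂) ℝ)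
    (Ustar : Matrix (Fin n₁) (Fin r) ℝ) (Vstar : Matrix (Fin n₂) (Fin r) ℝ)
    (σ : Fin r → ℝ) (hU : Ustarᵀ * Ustar = 1) (hV : Vstarᵀ * Vstar = 1)
    (hσ : ∀ i, 0 < σ i)
    (hX : Xstar = Ustar * Matrix.diagonal σ * Vstarᵀ)
    (Lstar : Matrix (Fin n₁) (Fin r) ℝ) (Rstar : Matrix (Fin n₂) (Fin r) ℝ)
    (hLstar : Lstar = Ustar * Matrix.diagonal (fun i => Real.sqrt (σ i)))
    (hRstar : Rstar = Vstar * Matrix.diagonal (fun i => Real.sqrt (σ i)))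
    (L : Matrix (Fin n₁) (Fin r) ℝ) (R : Matrix (Fin n₂) (Fin r) ℝ) :
    distF L R Lstar Rstar σ ≤ Real.sqrt (Real.sqrt 2 + 1) * frob (L * Rᵀ - Xstar) := by
  have hdiag : Matrix.diagonal (fun i => Real.sqrt (σ i)) *
      Matrix.diagonal (fun i => Real.sqrt (σ i)) = Matrix.diagonal σ := by
    rw [Matrix.diagonal_mul_diagonal]
    congr 1; ext i; exact Real.mul_self_sqrt (hσ i).le
  have hXs : Xstar = Lstar * Rstarᵀ := by
    rw [hX, hLstar, hRstar, Matrix.transpose_mul, Matrix.diagonal_transpose, ← hdiag]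
    simp only [Matrix.mul_assoc]
  have hLs : Lstarᵀ * Lstar = Matrix.diagonal σ := by
    rw [hLstar, Matrix.transpose_mul, Matrix.diagonal_transpose, Matrix.mul_assoc,
      ← Matrix.mul_assoc Ustarᵀ, hU, Matrix.one_mul, hdiag]
  have hRs : Rstarᵀ * Rstar = Matrix.diagonal σ := by
    rw [hRstar, Matrix.transpose_mul, Matrix.diagonal_transpose, Matrix.mul_assoc,
      ← Matrix.mul_assoc Vstarᵀ, hV, Matrix.one_mul, hdiag]
  have hS : (Matrix.diagonal σ).PosSemidef := Matrix.PosSemidef.diagonal fun i => (hσ i).le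
  have hbound : ∀ t : ℝ, 0 < t → distF L R Lstar Rstar σ ≤ Real.sqrt ((Real.sqrt 2 + 1) *
      (((L * Rᵀ - Lstar * Rstarᵀ)ᵀ * (L * Rᵀ - Lstar * Rstarᵀ)).trace +
      t ^ 2 * ((∑ i, ∑ j, L i j ^ 2) + ∑ i, ∑ j, R i j ^ 2) + t ^ 4 * r)) := by
    intro t ht
    obtain ⟨Q, hQ, hle⟩ := aux_full
      (Matrix.fromRows L (t • (1 : Matrix (Fin r) (Fin r) ℝ)))
      (Matrix.fromRows Lstar (0 : Matrix (Fin r) (Fin r) ℝ))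
      (Matrix.fromRows R (t • (1 : Matrix (Fin r) (Fin r) ℝ)))
      (Matrix.fromRows Rstar (0 : Matrix (Fin r) (Fin r) ℝ)) (Matrix.diagonal σ)
      (by rw [Matrix.transpose_fromRows, Matrix.fromCols_mul_fromRows, hLs]; simp)
      (by rw [Matrix.transpose_fromRows, Matrix.fromCols_mul_fromRows, hRs]; simp)
      (aux_reg_posDef L t ht) (aux_reg_posDef R t ht)
    rw [aux_reg_tr] at hle
    have h1 := aux_reg_ge L Lstar (t • (1 : Matrix (Fin r) (Fin r) ℝ)) Q _ hS
    have h2 := aux_reg_ge R Rstar (t • (1 : Matrix (Fin r) (Fin r) ℝ)) (Q⁻¹)ᵀ _ hS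
    refine le_trans (csInf_le ⟨0, ?_⟩ ⟨Q, hQ, rfl⟩) ?_
    · rintro c ⟨Q', -, rfl⟩
      exact Real.sqrt_nonneg _
    · apply Real.sqrt_le_sqrt
      rw [aux_frob_sq, aux_frob_sq, aux_weight _ _ hσ, aux_weight _ _ hσ]
      linarith
  have hcont : Continuous fun t : ℝ => Real.sqrt ((Real.sqrt 2 + 1) *
      (((L * Rᵀ - Lstar * Rstarᵀ)ᵀ * (L * Rᵀ - Lstar * Rstarᵀ)).trace +
      t ^ 2 * ((∑ i, ∑ j, L i j ^ 2) + ∑ i, ∑ j, R i j ^ 2) + t ^ 4 * r)) := by fun_prop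
  have hlim := (hcont.tendsto 0).mono_left (nhdsWithin_le_nhds (s := Set.Ioi 0))
  have hfin := ge_of_tendsto hlim (by
    filter_upwards [self_mem_nhdsWithin] with t ht using hbound t ht)
  refine hfin.trans (le_of_eq ?_)
  rw [hXs, ← aux_frob_sq]
  have h0 : 0 ≤ frob (L * Rᵀ - Lstar * Rstarᵀ) := Real.sqrt_nonneg _
  rw [show (Real.sqrt 2 + 1) * (frob (L * Rᵀ - Lstar * Rstarᵀ) ^ 2 +
      (0:ℝ) ^ 2 * ((∑ i, ∑ j, L i j ^ 2) + ∑ i, ∑ j, R i j ^ 2) + (0:ℝ) ^ 4 * r) =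
      (Real.sqrt 2 + 1) * frob (L * Rᵀ - Lstar * Rstarᵀ) ^ 2 by ring,
    Real.sqrt_mul (by positivity), Real.sqrt_sq h0]
end

section
/- Let X_star ∈ R^{n₁×n₂} be a rank-r matrix with compact SVD U_star·Σ_star·V_star^T and condition number κ = σ₁(X_star)/σ_r(X_star). Let A be a linear map obeying the rank-2r restricted isometry property with constant δ: for all M of rank at most 2r, (1−δ)‖M‖_F² ≤ ‖A(M)‖₂² ≤ (1+δ)‖M‖_F². Let L₀R₀^T be the best rank-r approximation (truncated SVD) of A*(A(X_star)), normalized so that L₀ = U₀Σ₀^{1/2}, R₀ = V₀Σ₀^{1/2}. Then dist(F₀, F_star) ≤ 5·δ·√r·κ·σ_r(X_star), where dist(F₀,F_star) = inf_{Q ∈ GL(r)} sqrt(‖(L₀Q − L_star)Σ_star^{1/2}‖_F² + ‖(R₀Q^{-T} − R_star)Σ_star^{1/2}‖_F²) with L_star = U_starΣ_star^{1/2}, R_star = V_starΣ_star^{1/2}. -/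
open Matrix

lemma polar_compact (r : ℕ) : IsCompact {Q : Matrix (Fin r) (Fin r) ℝ | Qᵀ * Q = 1} := by
  have hc : IsCompact (Set.univ.pi fun _ : Fin r => Set.univ.pi fun _ : Fin r => Set.Icc (-1:ℝ) 1) :=
    isCompact_univ_pi fun _ => isCompact_univ_pi fun _ => isCompact_Icc
  refine IsCompact.of_isClosed_subset hc ?_ ?_
  · exact isClosed_eq (by fun_prop) continuous_const
  · intro Q hQ i _ j _
    have h := congrFun (congrFun (show Qᵀ * Q = 1 from hQ) j) j
    simp only [Matrix.mul_apply, Matrix.transpose_apply, Matrix.one_apply_eq] at h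
    have h2 : Q i j * Q i j ≤ 1 := by
      rw [← h]
      exact Finset.single_le_sum (f := fun k => Q k j * Q k j)
        (fun k _ => mul_self_nonneg _) (Finset.mem_univ i)
    exact ⟨by nlinarith, by nlinarith⟩

lemma exists_polar {r : ℕ} (M : Matrix (Fin r) (Fin r) ℝ) :
    ∃ Q : Matrix (Fin r) (Fin r) ℝ, Qᵀ * Q = 1 ∧ (M * Q).PosSemidef := by
  obtain ⟨Q, hQ, hmax⟩ := (polar_compact r).exists_isMaxOn ⟨1, by simp⟩
    (f := fun Q => (M * Q).trace) (by fun_prop)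
  have hQ : Qᵀ * Q = 1 := hQ
  refine ⟨Q, hQ, ?_⟩
  set S := M * Q with hS
  have key : ∀ O : Matrix (Fin r) (Fin r) ℝ, Oᵀ * O = 1 → (S * O).trace ≤ S.trace := by
    intro O hO
    have : (M * (Q * O)).trace ≤ (M * Q).trace := hmax (show (Q * O)ᵀ * (Q * O) = 1 by
      rw [Matrix.transpose_mul, Matrix.mul_assoc, ← Matrix.mul_assoc Qᵀ, hQ, Matrix.one_mul, hO])
    rwa [← Matrix.mul_assoc] at this
  have hpos : ∀ v : Fin r → ℝ, 0 ≤ v ⬝ᵥ (S *ᵥ v) := by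
    intro v
    by_cases hv : v = 0
    · simp [hv]
    have hvv : 0 < v ⬝ᵥ v := by
      rcases (Finset.sum_nonneg fun i _ => mul_self_nonneg (v i)).lt_or_eq with h | h
      · exact h
      · exact absurd (dotProduct_self_eq_zero.1 h.symm) hv
    have h := key (1 - (2 / (v ⬝ᵥ v)) • vecMulVec v v) (by
      simp only [Matrix.transpose_sub, Matrix.transpose_one, Matrix.transpose_smul,
        Matrix.transpose_vecMulVec, sub_mul, mul_sub, Matrix.one_mul, Matrix.mul_one,
        Matrix.smul_mul, Matrix.mul_smul, Matrix.vecMulVec_mul_vecMulVec]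
      ext i j
      simp [vecMulVec_apply]
      field_simp
      ring)
    rw [mul_sub, Matrix.mul_one, Matrix.trace_sub, Matrix.mul_smul, Matrix.trace_smul,
      Matrix.mul_vecMulVec, Matrix.trace_vecMulVec, smul_eq_mul, dotProduct_comm (S *ᵥ v) v] at h
    have h1 : 0 < 2 / (v ⬝ᵥ v) := by positivity
    by_contra hn
    push Not at hn
    nlinarith [mul_neg_of_pos_of_neg h1 hn]
  refine Matrix.PosSemidef.of_dotProduct_mulVec_nonneg ?_ (by simpa using hpos)
  ext i j
  simp only [conjTranspose_apply, star_trivial]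
  by_cases hij : i = j
  · rw [hij]
  set P : Matrix (Fin r) (Fin r) ℝ := Matrix.single i i 1 + Matrix.single j j 1 with hP
  set J : Matrix (Fin r) (Fin r) ℝ := Matrix.single i j 1 - Matrix.single j i 1 with hJ
  have hij' : j ≠ i := fun h => hij h.symm
  have hPt : Pᵀ = P := by simp [hP]
  have hJt : Jᵀ = -J := by simp [hJ]
  have hPP : P * P = P := by
    simp [hP, mul_add, add_mul, hij, hij']
  have hPJ : P * J = J := by
    simp [hP, hJ, mul_sub, add_mul, hij, hij']
  have hJP : J * P = J := by
    simp [hP, hJ, sub_mul, mul_add, hij, hij']; abel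
  have hJJ : J * J = -P := by
    simp [hP, hJ, sub_mul, mul_sub, hij, hij']; abel
  have hg : ∀ c s : ℝ, c ^ 2 + s ^ 2 = 1 →
      (c - 1) * (S i i + S j j) + s * (S j i - S i j) ≤ 0 := by
    intro c s hcs
    have h := key (1 + (c - 1) • P + s • J) (by
      simp only [Matrix.transpose_add, Matrix.transpose_one, Matrix.transpose_smul, hPt, hJt,
        add_mul, mul_add, Matrix.one_mul, Matrix.mul_one, Matrix.smul_mul, Matrix.mul_smul,
        hPP, hPJ, hJP, hJJ, neg_mul]
      match_scalars
      all_goals first | (ring1) | (linear_combination hcs))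
    rw [mul_add, mul_add, Matrix.mul_one, Matrix.trace_add, Matrix.trace_add, Matrix.mul_smul,
      Matrix.trace_smul, Matrix.mul_smul, Matrix.trace_smul, hP, hJ, mul_add, mul_sub,
      Matrix.trace_add, Matrix.trace_sub] at h
    simp only [Matrix.trace_mul_single, smul_eq_mul, MulOpposite.op_one, one_smul] at h
    linarith
  have ha : ∀ k, 0 ≤ S k k := by
    intro k
    simpa using hpos (Pi.single k 1)
  have hii := ha i
  have hjj := ha j
  set a := S i i + S j j with hadef
  set b := S j i - S i j with hb
  have ha0 : 0 ≤ a := by positivity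
  have ht : ∀ t : ℝ, t * b ≤ t ^ 2 * a := by
    intro t
    have h1 : (0:ℝ) < 1 + t ^ 2 := by positivity
    have h := hg ((1 - t ^ 2) / (1 + t ^ 2)) (2 * t / (1 + t ^ 2)) (by field_simp; ring)
    have h2 : ((1 - t ^ 2) / (1 + t ^ 2) - 1) * a + 2 * t / (1 + t ^ 2) * b
      = 2 * (t * b - t ^ 2 * a) / (1 + t ^ 2) := by field_simp; ring
    rw [h2, div_le_iff₀ h1] at h
    linarith
  have hb0 : b = 0 := by
    have h := ht (b / (a + 1))
    have h1 : 0 < a + 1 := by linarith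
    have h2 : b / (a + 1) * b - (b / (a + 1)) ^ 2 * a = (b / (a + 1)) ^ 2 := by field_simp; ring
    have h3 : (b / (a + 1)) ^ 2 ≤ 0 := by linarith
    have h4 := pow_eq_zero_iff (two_ne_zero) |>.1 (le_antisymm h3 (sq_nonneg _))
    rcases div_eq_zero_iff.1 h4 with h5 | h5
    · exact h5
    · linarith
  linarith

lemma frob_sq {n₁ n₂ : ℕ} (A : Matrix (Fin n₁) (Fin n₂) ℝ) :
    frob A ^ 2 = (Aᵀ * A).trace := by
  rw [frob, Real.sq_sqrt (by positivity)]
  simp only [Matrix.trace, Matrix.diag, Matrix.mul_apply, Matrix.transpose_apply]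
  rw [Finset.sum_comm]
  simp [sq]

lemma frob_nonneg {n₁ n₂ : ℕ} (A : Matrix (Fin n₁) (Fin n₂) ℝ) : 0 ≤ frob A := Real.sqrt_nonneg _

lemma inner_eq {n₁ n₂ : ℕ} (A B : Matrix (Fin n₁) (Fin n₂) ℝ) :
    ∑ i, ∑ j, A i j * B i j = (Aᵀ * B).trace := by
  simp only [Matrix.trace, Matrix.diag, Matrix.mul_apply, Matrix.transpose_apply]
  rw [Finset.sum_comm]

lemma trace_self_nonneg {n₁ n₂ : ℕ} (A : Matrix (Fin n₁) (Fin n₂) ℝ) : 0 ≤ (Aᵀ * A).trace := by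
  rw [← frob_sq]; positivity

/-- key inequality in terms of Gram matrices -/
lemma gram_ineq {n₁ n₂ r : ℕ} (L Ls : Matrix (Fin n₁) (Fin r) ℝ) (R Rs : Matrix (Fin n₂) (Fin r) ℝ)
    (S : Matrix (Fin r) (Fin r) ℝ) (hS : S = Lsᵀ * L + Rsᵀ * R) (hpsd : S.PosSemidef) :
    (2 / 3) * (((L - Ls)ᵀ * (L - Ls) + (R - Rs)ᵀ * (R - Rs)) * (Lsᵀ * Ls + Rsᵀ * Rs)).trace
    ≤ ((Lᵀ * L + Rᵀ * R) * (Lᵀ * L + Rᵀ * R)).trace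
      + ((Lsᵀ * Ls + Rsᵀ * Rs) * (Lsᵀ * Ls + Rsᵀ * Rs)).trace - 2 * (Sᵀ * S).trace := by
  have hSt : Sᵀ = S := by simpa using hpsd.isHermitian.eq
  set A := Lᵀ * L + Rᵀ * R with hA
  set B := Lsᵀ * Ls + Rsᵀ * Rs with hB
  set K := (L - Ls)ᵀ * (L - Ls) + (R - Rs)ᵀ * (R - Rs) with hK
  have hAt : Aᵀ = A := by simp [hA]
  have hBt : Bᵀ = B := by simp [hB]
  have hKe : K = A - S - S + B := by
    nth_rewrite 1 [← hSt]
    simp only [hK, hS, hA, hB, Matrix.transpose_sub, Matrix.transpose_add, Matrix.transpose_mul,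
      Matrix.transpose_transpose, Matrix.sub_mul, Matrix.mul_sub]
    abel
  have hKS : 0 ≤ (K * S).trace := by
    have h1 : (K * S).trace = ((L - Ls) * S * (L - Ls)ᵀ).trace + ((R - Rs) * S * (R - Rs)ᵀ).trace := by
      rw [hK, add_mul, Matrix.trace_add, Matrix.mul_assoc, Matrix.trace_mul_comm,
        Matrix.mul_assoc (R - Rs)ᵀ, Matrix.trace_mul_comm (R - Rs)ᵀ]
    rw [h1]
    have h2 := (hpsd.mul_mul_conjTranspose_same (L - Ls)).trace_nonneg
    have h3 := (hpsd.mul_mul_conjTranspose_same (R - Rs)).trace_nonneg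
    simp only [conjTranspose_eq_transpose_of_trivial] at h2 h3
    linarith
  have hT : 0 ≤ ((S - B) * (S - B)).trace := by
    have := trace_self_nonneg (S - B)
    rwa [Matrix.transpose_sub, hSt, hBt] at this
  have hC : 0 ≤ ((K + (4/3 : ℝ) • (S - B)) * (K + (4/3 : ℝ) • (S - B))).trace := by
    have := trace_self_nonneg (K + (4/3 : ℝ) • (S - B))
    have hKt : Kᵀ = K := by simp [hKe, hAt, hBt, hSt]
    rwa [Matrix.transpose_add, Matrix.transpose_smul, Matrix.transpose_sub, hSt, hBt, hKt] at this
  rw [hSt]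
  clear_value K A B
  subst hKe
  simp only [sub_mul, mul_sub, add_mul, mul_add, Matrix.smul_mul, Matrix.mul_smul,
    Matrix.trace_add, Matrix.trace_sub, Matrix.trace_smul, smul_eq_mul, smul_sub] at *
  rw [Matrix.trace_mul_comm B A, Matrix.trace_mul_comm S A, Matrix.trace_mul_comm B S] at *
  linarith

/-- the bound on the Gram expression by the distance of products -/
lemma prod_ineq {n₁ n₂ r : ℕ} (L Ls : Matrix (Fin n₁) (Fin r) ℝ) (R Rs : Matrix (Fin n₂) (Fin r) ℝ)
    (hb : Lᵀ * L = Rᵀ * R) (hbs : Lsᵀ * Ls = Rsᵀ * Rs) :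
    ((Lᵀ * L + Rᵀ * R) * (Lᵀ * L + Rᵀ * R)).trace
      + ((Lsᵀ * Ls + Rsᵀ * Rs) * (Lsᵀ * Ls + Rsᵀ * Rs)).trace
      - 2 * ((Lsᵀ * L + Rsᵀ * R)ᵀ * (Lsᵀ * L + Rsᵀ * R)).trace
    ≤ 4 * frob (L * Rᵀ - Ls * Rsᵀ) ^ 2 := by
  have h := trace_self_nonneg (Lsᵀ * L - Rsᵀ * R)
  have c1 : ∀ (A C : Matrix (Fin n₁) (Fin r) ℝ) (B D : Matrix (Fin n₂) (Fin r) ℝ),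
      (B * Aᵀ * (C * Dᵀ)).trace = ((Aᵀ * C) * (Dᵀ * B)).trace := by
    intro A C B D
    rw [Matrix.mul_assoc, Matrix.trace_mul_comm]
    simp only [Matrix.mul_assoc]
  have c2 : (Rᵀ * Rs * (Lsᵀ * L)).trace = (Lsᵀ * L * (Rᵀ * Rs)).trace :=
    Matrix.trace_mul_comm _ _
  have c3 : (Lᵀ * Ls * (Rsᵀ * R)).trace = (Lsᵀ * L * (Rᵀ * Rs)).trace := by
    rw [← Matrix.trace_transpose]; simp only [Matrix.transpose_mul, Matrix.transpose_transpose]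
    exact c2
  rw [frob_sq]
  simp only [Matrix.transpose_sub, Matrix.transpose_add, Matrix.transpose_mul,
    Matrix.transpose_transpose, Matrix.sub_mul, Matrix.mul_sub, add_mul, mul_add,
    Matrix.trace_add, Matrix.trace_sub, c1, hb, hbs, c2, c3] at h ⊢
  linarith

lemma dist_le {n₁ n₂ r : ℕ} (L Ls : Matrix (Fin n₁) (Fin r) ℝ) (R Rs : Matrix (Fin n₂) (Fin r) ℝ)
    (σ : Fin r → ℝ) (hσ : ∀ i, 0 ≤ σ i)
    (hb : Lᵀ * L = Rᵀ * R) (hL : Lsᵀ * Ls = diagonal σ) (hR : Rsᵀ * Rs = diagonal σ) :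
    distF L R Ls Rs σ ≤ Real.sqrt (3 * frob (L * Rᵀ - Ls * Rsᵀ) ^ 2) := by
  obtain ⟨Q, hQ, hpsd⟩ := exists_polar (Lsᵀ * L + Rsᵀ * R)
  have hQ' : Q * Qᵀ = 1 := mul_eq_one_comm.1 hQ
  have hinv : (Q⁻¹)ᵀ = Q := by rw [Matrix.inv_eq_left_inv hQ, Matrix.transpose_transpose]
  have hunit : IsUnit Q := IsUnit.of_mul_eq_one _ hQ'
  unfold distF
  refine le_trans (csInf_le (⟨0, ?_⟩ : BddBelow _) ⟨Q, hunit, rfl⟩) ?_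
  · rintro c ⟨_, _, rfl⟩
    exact Real.sqrt_nonneg _
  refine Real.sqrt_le_sqrt ?_
  rw [hinv]
  have hd : diagonal (fun i => Real.sqrt (σ i)) * diagonal (fun i => Real.sqrt (σ i))
      = diagonal σ := by
    rw [diagonal_mul_diagonal]
    congr 1
    ext i
    exact Real.mul_self_sqrt (hσ i)
  have hf : ∀ {n : ℕ} (H : Matrix (Fin n) (Fin r) ℝ),
      frob (H * diagonal (fun i => Real.sqrt (σ i))) ^ 2 = (Hᵀ * H * diagonal σ).trace := by
    intro n H
    rw [frob_sq, Matrix.transpose_mul, diagonal_transpose, Matrix.mul_assoc, Matrix.trace_mul_comm,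
      Matrix.mul_assoc, Matrix.mul_assoc, hd, Matrix.mul_assoc]
  rw [hf, hf]
  have g := gram_ineq (L * Q) Ls (R * Q) Rs _ rfl (by
    rw [← Matrix.mul_assoc, ← Matrix.mul_assoc, ← add_mul]; exact hpsd)
  have p := prod_ineq (L * Q) Ls (R * Q) Rs (by
    rw [Matrix.transpose_mul, Matrix.transpose_mul, Matrix.mul_assoc, ← Matrix.mul_assoc Lᵀ, hb]
    simp only [Matrix.mul_assoc]) (hL.trans hR.symm)
  have e : L * Q * (R * Q)ᵀ = L * Rᵀ := by
    rw [Matrix.transpose_mul, Matrix.mul_assoc, ← Matrix.mul_assoc Q, hQ', Matrix.one_mul]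
  rw [e] at p
  have t := g.trans p
  rw [hL, hR, mul_add, add_mul, Matrix.trace_add, Matrix.trace_add] at t
  linarith

lemma inner_comm' {n₁ n₂ : ℕ} (A B : Matrix (Fin n₁) (Fin n₂) ℝ) :
    (Aᵀ * B).trace = (Bᵀ * A).trace := by
  rw [← Matrix.trace_transpose, Matrix.transpose_mul, Matrix.transpose_transpose]

lemma frob_sq_comb {n₁ n₂ : ℕ} (A B : Matrix (Fin n₁) (Fin n₂) ℝ) (a b : ℝ) :
    frob (a • A + b • B) ^ 2
      = a ^ 2 * frob A ^ 2 + 2 * a * b * (Aᵀ * B).trace + b ^ 2 * frob B ^ 2 := by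
  simp only [frob_sq, Matrix.transpose_add, Matrix.transpose_smul, Matrix.add_mul, Matrix.mul_add,
    Matrix.smul_mul, Matrix.mul_smul, Matrix.trace_add, Matrix.trace_smul, smul_eq_mul,
    inner_comm' B A]
  ring

lemma rip_cross {n₁ n₂ m r : ℕ} (𝓐 : Matrix (Fin n₁) (Fin n₂) ℝ →ₗ[ℝ] (Fin m → ℝ))
    (δ : ℝ)
    (hRIP : ∀ M : Matrix (Fin n₁) (Fin n₂) ℝ, M.rank ≤ 2 * r →
      (1 - δ) * (frob M) ^ 2 ≤ ∑ k, (𝓐 M k) ^ 2 ∧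
      ∑ k, (𝓐 M k) ^ 2 ≤ (1 + δ) * (frob M) ^ 2)
    (X W : Matrix (Fin n₁) (Fin n₂) ℝ) (hXW : ∀ a b : ℝ, (a • X + b • W).rank ≤ 2 * r)
    (hX : 0 < frob X) (hW : 0 < frob W) :
    ∑ k, 𝓐 X k * 𝓐 W k - (Xᵀ * W).trace ≤ δ * frob X * frob W := by
  have h1 := (hRIP _ (hXW (frob W) (frob X))).2
  have h2 := (hRIP _ (hXW (frob W) (-frob X))).1
  have hs : ∀ a b : ℝ, ∑ k, (𝓐 (a • X + b • W) k) ^ 2 = a ^ 2 * ∑ k, (𝓐 X k) ^ 2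
      + 2 * a * b * ∑ k, 𝓐 X k * 𝓐 W k + b ^ 2 * ∑ k, (𝓐 W k) ^ 2 := by
    intro a b
    simp only [Finset.mul_sum, ← Finset.sum_add_distrib, map_add, map_smul, Pi.add_apply,
      Pi.smul_apply, smul_eq_mul]
    refine Finset.sum_congr rfl fun k _ => ?_
    ring
  rw [hs, frob_sq_comb] at h1 h2
  have h3 : 0 < 4 * (frob X * frob W) := by positivity
  refine le_of_mul_le_mul_left ?_ h3
  nlinarith

lemma init_err {n₁ n₂ m r : ℕ} (𝓐 : Matrix (Fin n₁) (Fin n₂) ℝ →ₗ[ℝ] (Fin m → ℝ))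
    (δ : ℝ) (hδ0 : 0 ≤ δ)
    (hRIP : ∀ M : Matrix (Fin n₁) (Fin n₂) ℝ, M.rank ≤ 2 * r →
      (1 - δ) * (frob M) ^ 2 ≤ ∑ k, (𝓐 M k) ^ 2 ∧
      ∑ k, (𝓐 M k) ^ 2 ≤ (1 + δ) * (frob M) ^ 2)
    (X X0 Y : Matrix (Fin n₁) (Fin n₂) ℝ)
    (hY : ∀ M : Matrix (Fin n₁) (Fin n₂) ℝ, ∑ i, ∑ j, Y i j * M i j = ∑ k, 𝓐 X k * 𝓐 M k)
    (hrk : ∀ a b : ℝ, (a • X + b • X0).rank ≤ 2 * r)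
    (hX : 0 < frob X) (hb : frob (Y - X0) ≤ frob (Y - X)) :
    frob (X0 - X) ≤ 2 * δ * frob X := by
  rcases (frob_nonneg (X0 - X)).eq_or_lt with h0 | h0
  · rw [← h0]; positivity
  have h := rip_cross 𝓐 δ hRIP X (X0 - X) (fun a b => by
    have := hrk (a - b) b
    rwa [show a • X + b • (X0 - X) = (a - b) • X + b • X0 by module]) hX h0
  have hY' := hY (X0 - X)
  rw [inner_eq] at hY'
  have hsq : frob (Y - X0) ^ 2 ≤ frob (Y - X) ^ 2 := pow_le_pow_left₀ (frob_nonneg _) hb 2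
  have e1 := frob_sq_comb (Y - X) (X0 - X) 1 (-1)
  rw [show (1:ℝ) • (Y - X) + (-1:ℝ) • (X0 - X) = Y - X0 by module, Matrix.transpose_sub,
    Matrix.sub_mul, Matrix.trace_sub] at e1
  refine le_of_mul_le_mul_left ?_ h0
  nlinarith

/-- Spectral initialization guarantee for low-rank matrix sensing: if the measurement map `𝓐`
satisfies the rank-`2r` RIP with constant `δ`, and `L₀ = U₀ Σ₀^{1/2}`, `R₀ = V₀ Σ₀^{1/2}` come
from the best rank-`r` approximation `U₀ Σ₀ V₀ᵀ` of `𝓐*(𝓐(X_star))`, then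
`dist(F₀, F_star) ≤ 5 δ √r κ σ_r(X_star)`. -/
theorem spectral_init_matrix_sensing {n₁ n₂ m r : ℕ} (hr : 0 < r)
    (Xstar : Matrix (Fin n₁) (Fin n₂) ℝ)
    (Ustar : Matrix (Fin n₁) (Fin r) ℝ) (Vstar : Matrix (Fin n₂) (Fin r) ℝ)
    (σ : Fin r → ℝ) (hU : Ustarᵀ * Ustar = 1) (hV : Vstarᵀ * Vstar = 1)
    (hσ : ∀ i, 0 < σ i) (hsort : Antitone σ)
    (hX : Xstar = Ustar * Matrix.diagonal σ * Vstarᵀ)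
    (Lstar : Matrix (Fin n₁) (Fin r) ℝ) (Rstar : Matrix (Fin n₂) (Fin r) ℝ)
    (hLstar : Lstar = Ustar * Matrix.diagonal (fun i => Real.sqrt (σ i)))
    (hRstar : Rstar = Vstar * Matrix.diagonal (fun i => Real.sqrt (σ i)))
    (κ : ℝ) (hκ : κ = σ ⟨0, hr⟩ / σ ⟨r - 1, Nat.sub_lt hr one_pos⟩)
    (𝓐 : Matrix (Fin n₁) (Fin n₂) ℝ →ₗ[ℝ] (Fin m → ℝ))
    (δ : ℝ) (hδ0 : 0 ≤ δ) (hδ1 : δ < 1)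
    (hRIP : ∀ M : Matrix (Fin n₁) (Fin n₂) ℝ, M.rank ≤ 2 * r →
      (1 - δ) * (frob M) ^ 2 ≤ ∑ k, (𝓐 M k) ^ 2 ∧
      ∑ k, (𝓐 M k) ^ 2 ≤ (1 + δ) * (frob M) ^ 2)
    (Aadj : (Fin m → ℝ) → Matrix (Fin n₁) (Fin n₂) ℝ)
    (hAadj : ∀ (y : Fin m → ℝ) (M : Matrix (Fin n₁) (Fin n₂) ℝ),
      ∑ i, ∑ j, Aadj y i j * M i j = ∑ k, y k * 𝓐 M k)
    (U₀ : Matrix (Fin n₁) (Fin r) ℝ) (σ₀ : Fin r → ℝ) (V₀ : Matrix (Fin n₂) (Fin r) ℝ)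
    (hU₀ : U₀ᵀ * U₀ = 1) (hV₀ : V₀ᵀ * V₀ = 1) (hσ₀ : ∀ i, 0 ≤ σ₀ i)
    (hbest : ∀ Z : Matrix (Fin n₁) (Fin n₂) ℝ, Z.rank ≤ r →
      frob (Aadj (𝓐 Xstar) - U₀ * Matrix.diagonal σ₀ * V₀ᵀ) ≤ frob (Aadj (𝓐 Xstar) - Z))
    (L₀ : Matrix (Fin n₁) (Fin r) ℝ) (R₀ : Matrix (Fin n₂) (Fin r) ℝ)
    (hL₀ : L₀ = U₀ * Matrix.diagonal (fun i => Real.sqrt (σ₀ i)))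
    (hR₀ : R₀ = V₀ * Matrix.diagonal (fun i => Real.sqrt (σ₀ i))) :
    distF L₀ R₀ Lstar Rstar σ ≤
      5 * δ * Real.sqrt r * κ * σ ⟨r - 1, Nat.sub_lt hr one_pos⟩ := by
  have hdiag : ∀ s : Fin r → ℝ, (∀ i, 0 ≤ s i) →
      diagonal (fun i => Real.sqrt (s i)) * diagonal (fun i => Real.sqrt (s i)) = diagonal s := by
    intro s hs
    rw [diagonal_mul_diagonal]
    congr 1
    ext i
    exact Real.mul_self_sqrt (hs i)
  have hσ' : ∀ i, 0 ≤ σ i := fun i => (hσ i).le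
  have gram : ∀ {n : ℕ} (U : Matrix (Fin n) (Fin r) ℝ) (s : Fin r → ℝ), Uᵀ * U = 1 →
      (∀ i, 0 ≤ s i) → (U * diagonal (fun i => Real.sqrt (s i)))ᵀ *
        (U * diagonal (fun i => Real.sqrt (s i))) = diagonal s := by
    intro n U s hU hs
    rw [Matrix.transpose_mul, diagonal_transpose, Matrix.mul_assoc, ← Matrix.mul_assoc Uᵀ, hU,
      Matrix.one_mul, hdiag s hs]
  have prod : ∀ (U : Matrix (Fin n₁) (Fin r) ℝ) (V : Matrix (Fin n₂) (Fin r) ℝ) (s : Fin r → ℝ),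
      (∀ i, 0 ≤ s i) → (U * diagonal (fun i => Real.sqrt (s i))) *
        (V * diagonal (fun i => Real.sqrt (s i)))ᵀ = U * diagonal s * Vᵀ := by
    intro U V s hs
    rw [Matrix.transpose_mul, diagonal_transpose, Matrix.mul_assoc, ← Matrix.mul_assoc (diagonal _),
      hdiag s hs, Matrix.mul_assoc]
  have hd := dist_le L₀ Lstar R₀ Rstar σ hσ'
    (by rw [hL₀, hR₀, gram _ _ hU₀ hσ₀, gram _ _ hV₀ hσ₀])
    (by rw [hLstar, gram _ _ hU hσ']) (by rw [hRstar, gram _ _ hV hσ'])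
  rw [hL₀, hR₀, hLstar, hRstar, prod _ _ _ hσ₀, prod _ _ _ hσ', ← hX, ← hL₀, ← hR₀, ← hLstar,
    ← hRstar] at hd
  have rk : ∀ (U : Matrix (Fin n₁) (Fin r) ℝ) (s : Fin r → ℝ) (V : Matrix (Fin n₂) (Fin r) ℝ),
      (U * diagonal s * Vᵀ).rank ≤ r := by
    intro U s V
    rw [Matrix.mul_assoc]
    exact (Matrix.rank_mul_le_left _ _).trans (Matrix.rank_le_width _)
  have hXf : frob Xstar ^ 2 = ∑ i, σ i ^ 2 := by
    rw [frob_sq, hX, Matrix.transpose_mul, Matrix.transpose_mul, diagonal_transpose,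
      Matrix.transpose_transpose, Matrix.mul_assoc, Matrix.trace_mul_comm]
    have : diagonal σ * Ustarᵀ * (Ustar * diagonal σ * Vstarᵀ) * Vstar
        = diagonal σ * (Ustarᵀ * Ustar) * diagonal σ * (Vstarᵀ * Vstar) := by
      simp only [Matrix.mul_assoc]
    rw [this, hU, hV, Matrix.mul_one, Matrix.mul_one, diagonal_mul_diagonal, Matrix.trace_diagonal]
    simp [sq]
  have hXpos : 0 < frob Xstar := by
    have : 0 < frob Xstar ^ 2 := by
      rw [hXf]
      exact Finset.sum_pos (fun i _ => pow_pos (hσ i) 2) ⟨⟨0, hr⟩, Finset.mem_univ _⟩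
    exact (frob_nonneg _).lt_of_ne fun h => by rw [← h] at this; simp at this
  have hXle : frob Xstar ≤ Real.sqrt r * σ ⟨0, hr⟩ := by
    refine (sq_le_sq₀ (frob_nonneg _) (mul_nonneg (Real.sqrt_nonneg _) (hσ' _))).1 ?_
    rw [hXf, mul_pow, Real.sq_sqrt (Nat.cast_nonneg r)]
    calc ∑ i, σ i ^ 2 ≤ ∑ _i : Fin r, σ ⟨0, hr⟩ ^ 2 := Finset.sum_le_sum fun i _ =>
          pow_le_pow_left₀ (hσ' i) (hsort (Fin.mk_le_of_le_val (Nat.zero_le _))) 2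
      _ = r * σ ⟨0, hr⟩ ^ 2 := by simp
  have herr := init_err 𝓐 δ hδ0 hRIP Xstar (U₀ * Matrix.diagonal σ₀ * V₀ᵀ) (Aadj (𝓐 Xstar))
    (hAadj _) (fun a b => by
      have h1 : a • Xstar + b • (U₀ * Matrix.diagonal σ₀ * V₀ᵀ) = Matrix.fromCols Ustar U₀ *
          Matrix.fromRows (a • (Matrix.diagonal σ * Vstarᵀ)) (b • (Matrix.diagonal σ₀ * V₀ᵀ)) := by
        rw [Matrix.fromCols_mul_fromRows, Matrix.mul_smul, Matrix.mul_smul, hX, Matrix.mul_assoc,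
          Matrix.mul_assoc]
      rw [h1]
      refine (Matrix.rank_mul_le_left _ _).trans ((Matrix.rank_le_card_width _).trans ?_)
      simp only [Fintype.card_sum, Fintype.card_fin]
      omega) hXpos (hbest _ (by rw [hX]; exact rk _ _ _))
  have hκσ : κ * σ ⟨r - 1, Nat.sub_lt hr one_pos⟩ = σ ⟨0, hr⟩ := by
    rw [hκ, div_mul_cancel₀ _ (hσ _).ne']
  calc distF L₀ R₀ Lstar Rstar σ
      ≤ Real.sqrt (3 * frob (U₀ * Matrix.diagonal σ₀ * V₀ᵀ - Xstar) ^ 2) := hd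
    _ ≤ 5 * δ * frob Xstar := by
        refine Real.sqrt_le_iff.2 ⟨by positivity, ?_⟩
        have := pow_le_pow_left₀ (frob_nonneg _) herr 2
        nlinarith [sq_nonneg (δ * frob Xstar)]
    _ ≤ 5 * δ * (Real.sqrt r * σ ⟨0, hr⟩) := mul_le_mul_of_nonneg_left hXle (by positivity)
    _ = _ := by rw [← hκσ]; ring
end
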